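/- arXiv:2002.05240 — 2 statements merged into one kernel-verified Lean document; each statement's English description precedes it below -/
import Mathlib

section
/- Fix an integer k ≥ 2, an integer n ≥ 1, and battlefield values v_1,…,v_n > 0 with V = Σ_{j=1}^n v_j. Suppose there is a partition function π : [n] → [k] such that Σ_{j ∈ π^{-1}(m)} v_j = V/k for every m ∈ [k]. Then there exists a probability measure μ on ℝ^n such that μ-almost surely every coordinate A_j is nonnegative and Σ_{j=1}^n A_j = 1, and for every j ∈ [n] and x ≥ 0, μ{A : A_j ≤ x} = min(1, (V·x/(k·v_j))^{1/(k-1)}). -/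
open MeasureTheory ProbabilityTheory

lemma measurable_gammaPDF (a r : ℝ) : Measurable (gammaPDF a r) :=
  (measurable_gammaPDFReal a r).ennreal_ofReal

lemma mgf_id_gammaMeasure {a : ℝ} (ha : 0 < a) (t : ℝ) :
    mgf id (gammaMeasure a 1) t = if t < 1 then (1 - t) ^ (-a) else 0 := by
  have hpdf (x : ℝ) : (gammaPDF a 1 x).toReal = gammaPDFReal a 1 x :=
    ENNReal.toReal_ofReal (gammaPDFReal_nonneg ha one_pos x)
  have hint : mgf id (gammaMeasure a 1) t =
      (1 / Real.Gamma a) * ∫ x in Set.Ioi 0, x ^ (a - 1) * Real.exp (-((1 - t) * x)) := by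
    rw [mgf, gammaMeasure, integral_withDensity_eq_integral_toReal_smul
      (measurable_gammaPDF a 1) (by simp [gammaPDF]), ← integral_const_mul,
      ← integral_Ici_eq_integral_Ioi, ← integral_indicator measurableSet_Ici]
    congr 1 with x
    simp only [hpdf, gammaPDFReal, Set.indicator_apply, Set.mem_Ici, id, smul_eq_mul]
    split_ifs
    · rw [Real.one_rpow, mul_assoc, mul_assoc, ← Real.exp_add]
      ring_nf
    · simp
  rw [hint]
  split_ifs with ht
  · have h := sub_pos.mpr ht
    rw [Real.integral_rpow_mul_exp_neg_mul_Ioi ha h, one_div (1 - t), Real.inv_rpow h.le,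
      Real.rpow_neg h.le]
    field_simp [(Real.Gamma_pos_of_pos ha).ne']
  · rw [integral_undef, mul_zero]
    refine fun h ↦ not_integrableOn_Ioi_rpow (a - 1) (Integrable.mono' h (by fun_prop) ?_)
    filter_upwards [ae_restrict_mem measurableSet_Ioi] with x hx
    have hx : 0 < x := hx
    rw [Real.norm_of_nonneg (by positivity)]
    refine le_mul_of_one_le_right (by positivity) (Real.one_le_exp ?_)
    nlinarith

lemma ae_gammaMeasure_pos (a r : ℝ) : ∀ᵐ x ∂gammaMeasure a r, 0 < x := by
  rw [gammaMeasure, ae_withDensity_iff (measurable_gammaPDF a r)]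
  filter_upwards [Measure.ae_ne volume (0 : ℝ)] with x hx hpdf
  by_contra! h
  exact hpdf (gammaPDF_of_neg (lt_of_le_of_ne h hx))

lemma integrableExpSet_id_gammaMeasure {a : ℝ} (ha : 0 < a) :
    integrableExpSet id (gammaMeasure a 1) = Set.Iio 1 := by
  have := isProbabilityMeasure_gammaMeasure ha one_pos
  ext t
  rw [integrableExpSet, Set.mem_ofPred_eq, ← mgf_pos_iff, mgf_id_gammaMeasure ha]
  simp only [Set.mem_Iio]
  split_ifs with h
  · simp [h, Real.rpow_pos_of_pos (sub_pos.mpr h)]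
  · simp [h]

lemma map_eq_gammaMeasure_of_mgf_eq {Ω : Type*} [MeasurableSpace Ω] {P : Measure Ω}
    [IsProbabilityMeasure P] {X : Ω → ℝ} (hX : AEMeasurable X P) {a : ℝ} (ha : 0 < a)
    (h : mgf X P = mgf id (gammaMeasure a 1)) : P.map X = gammaMeasure a 1 := by
  have := isProbabilityMeasure_gammaMeasure ha one_pos
  have := Measure.isProbabilityMeasure_map hX
  have hid : mgf id (gammaMeasure a 1) = mgf id (P.map X) := by rw [mgf_id_map hX, h]
  refine Measure.ext_of_charFun (funext fun t ↦ ?_)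
  rw [← complexMGF_id_mul_I, ← complexMGF_id_mul_I]
  refine (eqOn_complexMGF_of_mgf hid ?_).symm
  simp [integrableExpSet_id_gammaMeasure ha]

lemma iIndepFun_eval_pi {ι E : Type*} [Fintype ι] [MeasurableSpace E] (ν : Measure E)
    [IsProbabilityMeasure ν] :
    iIndepFun (fun (i : ι) (ω : ι → E) ↦ ω i) (Measure.pi fun _ : ι ↦ ν) :=
  iIndepFun_pi (X := fun _ ↦ id) fun _ ↦ aemeasurable_id

lemma map_sum_pi_gammaMeasure {ι : Type*} [Fintype ι] {a : ℝ} (ha : 0 < a)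
    {s : Finset ι} (hs : s.Nonempty) :
    (Measure.pi fun _ : ι ↦ gammaMeasure a 1).map (∑ j ∈ s, fun ω : ι → ℝ ↦ ω j) =
      gammaMeasure (s.card * a) 1 := by
  have := isProbabilityMeasure_gammaMeasure ha one_pos
  have hc : (0 : ℝ) < s.card := by exact_mod_cast hs.card_pos
  have hmap (j : ι) : (Measure.pi fun _ : ι ↦ gammaMeasure a 1).map (fun ω ↦ ω j) =
      gammaMeasure a 1 := (measurePreserving_eval _ j).map_eq
  refine map_eq_gammaMeasure_of_mgf_eq (by fun_prop) (by positivity) (funext fun t ↦ ?_)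
  rw [iIndepFun.mgf_sum (iIndepFun_eval_pi _) (fun j ↦ by fun_prop)]
  have (j : ι) : mgf (fun ω : ι → ℝ ↦ ω j) (Measure.pi fun _ : ι ↦ gammaMeasure a 1) t =
      mgf id (gammaMeasure a 1) t := by
    rw [← mgf_id_map (measurable_pi_apply j).aemeasurable, hmap]
  simp only [this, mgf_id_gammaMeasure ha, mgf_id_gammaMeasure (mul_pos hc ha),
    Finset.prod_const]
  split_ifs with ht
  · rw [← Real.rpow_mul_natCast (sub_pos.mpr ht).le]
    ring_nf
  · exact zero_pow hs.card_pos.ne'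

lemma expMeasure_Ici {r s : ℝ} (hr : 0 < r) (hs : 0 ≤ s) :
    expMeasure r (Set.Ici s) = ENNReal.ofReal (Real.exp (-(r * s))) := by
  have := isProbabilityMeasure_expMeasure hr
  have h : expMeasure r {s} = 0 :=
    (withDensity_absolutelyContinuous _ _ : expMeasure r ≪ volume) (measure_singleton s)
  rw [← measure_congr (Ioi_ae_eq_Ici' h), ← Set.compl_Iic, prob_compl_eq_one_sub measurableSet_Iic,
    ← ofReal_cdf, cdf_expMeasure_eq hr, if_pos hs, ← ENNReal.ofReal_one,
    ← ENNReal.ofReal_sub _ (by simpa using by positivity)]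
  ring_nf

lemma prod_gammaMeasure_expMeasure {a c : ℝ} (ha : 0 < a) (hc : 0 ≤ c) :
    ((gammaMeasure a 1).prod (expMeasure 1)) {p | c * p.1 ≤ p.2} =
      ENNReal.ofReal ((1 + c) ^ (-a)) := by
  have := isProbabilityMeasure_gammaMeasure ha one_pos
  have := isProbabilityMeasure_expMeasure one_pos
  rw [Measure.prod_apply (measurableSet_le (by fun_prop) (by fun_prop))]
  have hm := mgf_id_gammaMeasure ha (-c)
  rw [if_pos (by linarith), sub_neg_eq_add] at hm
  rw [← hm, mgf, ofReal_integral_eq_lintegral_ofReal _ (ae_of_all _ fun _ ↦ by positivity)]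
  · refine lintegral_congr_ae ?_
    filter_upwards [ae_gammaMeasure_pos a 1] with x hx
    have : Prod.mk x ⁻¹' {p : ℝ × ℝ | c * p.1 ≤ p.2} = Set.Ici (c * x) := by ext; simp
    rw [this, expMeasure_Ici one_pos (by positivity)]
    simp
  · have : -c ∈ integrableExpSet id (gammaMeasure a 1) := by
      rw [integrableExpSet_id_gammaMeasure ha]; simp; linarith
    exact this

lemma map_eval_sum_erase_pi_gammaMeasure {ι : Type*} [Fintype ι] [DecidableEq ι]
    (hι : 2 ≤ Fintype.card ι) (i : ι) :
    (Measure.pi fun _ : ι ↦ gammaMeasure (1 / ((Fintype.card ι : ℝ) - 1)) 1).map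
        (fun ω ↦ (ω i, (∑ j ∈ Finset.univ.erase i, fun ω : ι → ℝ ↦ ω j) ω)) =
      (gammaMeasure (1 / ((Fintype.card ι : ℝ) - 1)) 1).prod (expMeasure 1) := by
  have hι' : (2 : ℝ) ≤ Fintype.card ι := by exact_mod_cast hι
  have ha : 0 < 1 / ((Fintype.card ι : ℝ) - 1) := one_div_pos.mpr (by linarith)
  have := isProbabilityMeasure_gammaMeasure ha one_pos
  have hindep := (iIndepFun_eval_pi (ι := ι)
    (gammaMeasure (1 / ((Fintype.card ι : ℝ) - 1)) 1)).indepFun_finsetSum_of_notMem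
    (fun j ↦ by fun_prop) (Finset.notMem_erase i Finset.univ)
  have hcard : (Finset.univ.erase i).card = Fintype.card ι - 1 := by
    rw [Finset.card_erase_of_mem (Finset.mem_univ i), Finset.card_univ]
  rw [(indepFun_iff_map_prod_eq_prod_map_map
      (measurable_pi_apply i).aemeasurable (by fun_prop)).mp hindep.symm,
    map_sum_pi_gammaMeasure ha (Finset.card_pos.mp (by omega)), hcard,
    (measurePreserving_eval _ i).map_eq, Nat.cast_sub (by omega), Nat.cast_one,
    mul_one_div_cancel (by linarith), expMeasure]

theorem exists_measure_simplex_marginal_rpow {ι : Type*} [Fintype ι]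
    (hι : 2 ≤ Fintype.card ι) :
    ∃ μ : Measure (ι → ℝ), IsProbabilityMeasure μ ∧
      (∀ᵐ p ∂μ, (∀ i, 0 ≤ p i) ∧ ∑ i, p i = 1) ∧
      ∀ i, ∀ x : ℝ, 0 ≤ x → μ {p | p i ≤ x} =
        ENNReal.ofReal (min 1 (x ^ (1 / ((Fintype.card ι : ℝ) - 1)))) := by
  classical
  set a : ℝ := 1 / ((Fintype.card ι : ℝ) - 1) with ha_def
  have hι' : (2 : ℝ) ≤ Fintype.card ι := by exact_mod_cast hι
  have ha : 0 < a := one_div_pos.mpr (by linarith)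
  have : Nonempty ι := Fintype.card_pos_iff.mp (by omega)
  have := isProbabilityMeasure_gammaMeasure ha one_pos
  set P : Measure (ι → ℝ) := Measure.pi fun _ ↦ gammaMeasure a 1 with hP
  have hpos : ∀ᵐ ω ∂P, (∀ i, 0 < ω i) ∧ 0 < ∑ i, ω i := by
    have h : ∀ᵐ ω ∂P, ∀ i, 0 < ω i := ae_all_iff.mpr fun i ↦
      (measurePreserving_eval _ i).quasiMeasurePreserving.ae (ae_gammaMeasure_pos a 1)
    filter_upwards [h] with ω hω
    exact ⟨hω, Finset.sum_pos (fun i _ ↦ hω i) Finset.univ_nonempty⟩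
  have hmeas : Measurable fun (ω : ι → ℝ) i ↦ ω i / ∑ j, ω j := by fun_prop
  refine ⟨P.map fun ω i ↦ ω i / ∑ j, ω j, Measure.isProbabilityMeasure_map hmeas.aemeasurable,
    ?_, fun i x hx ↦ ?_⟩
  · rw [ae_map_iff hmeas.aemeasurable (by measurability)]
    filter_upwards [hpos] with ω hω
    exact ⟨fun i ↦ (div_pos (hω.1 i) hω.2).le, by rw [← Finset.sum_div, div_self hω.2.ne']⟩
  rw [Measure.map_apply hmeas (measurableSet_le (by fun_prop) (by fun_prop)),
    Set.preimage_ofPred_eq]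
  rcases hx.eq_or_lt with rfl | hx0
  · rw [Real.zero_rpow ha.ne', min_eq_right zero_le_one, ENNReal.ofReal_zero,
      measure_eq_zero_iff_ae_notMem]
    filter_upwards [hpos] with ω hω
    simpa using div_pos (hω.1 i) hω.2
  rcases le_or_gt 1 x with hx1 | hx1
  · rw [min_eq_left (Real.one_le_rpow hx1 ha.le), ENNReal.ofReal_one, ← mem_ae_iff_prob_eq_one]
    · filter_upwards [hpos] with ω hω
      refine le_trans ((div_le_one hω.2).mpr ?_) hx1
      exact Finset.single_le_sum (fun j _ ↦ (hω.1 j).le) (Finset.mem_univ i)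
    · exact measurableSet_le (by fun_prop) (by fun_prop)
  have hc : 0 ≤ (1 - x) / x := div_nonneg (by linarith) hx
  have hprod := prod_gammaMeasure_expMeasure ha hc
  rw [ha_def, ← map_eval_sum_erase_pi_gammaMeasure hι i, Measure.map_apply (by fun_prop)
    (measurableSet_le (by fun_prop) (by fun_prop)), Set.preimage_ofPred_eq, ← ha_def, ← hP,
    show 1 + (1 - x) / x = x⁻¹ by field_simp; ring, Real.inv_rpow hx, ← Real.rpow_neg hx,
    neg_neg] at hprod
  rw [min_eq_right (Real.rpow_le_one hx hx1.le ha.le), ← hprod]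
  refine measure_congr ?_
  filter_upwards [hpos] with ω hω
  refine propext ?_
  change ω i / ∑ j, ω j ≤ x ↔ (1 - x) / x * ω i ≤
    (∑ j ∈ Finset.univ.erase i, fun ω : ι → ℝ ↦ ω j) ω
  rw [Finset.sum_apply, Finset.sum_erase_eq_sub (Finset.mem_univ i), div_le_iff₀ hω.2,
    div_mul_eq_mul_div, div_le_iff₀ hx0]
  constructor <;> intro h <;> linarith

theorem stmt3 (k n : ℕ) (hk : 2 ≤ k) (hn : 1 ≤ n) (v : Fin n → ℝ) (hv : ∀ j, 0 < v j)
    (part : Fin n → Fin k)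
    (hpart : ∀ m : Fin k,
      ∑ j ∈ Finset.univ.filter (fun j => part j = m), v j = (∑ l, v l) / k) :
    ∃ μ : Measure (Fin n → ℝ), IsProbabilityMeasure μ ∧
      (∀ᵐ A ∂μ, (∀ j, 0 ≤ A j) ∧ ∑ j, A j = 1) ∧
      (∀ j, ∀ x : ℝ, 0 ≤ x →
        μ {A : Fin n → ℝ | A j ≤ x} =
          ENNReal.ofReal (min 1
            (((∑ l, v l) * x / ((k : ℝ) * v j)) ^ ((1 : ℝ) / ((k : ℝ) - 1))))) := by
  obtain ⟨μ, hμ, hsimplex, hmarginal⟩ :=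
    exists_measure_simplex_marginal_rpow (ι := Fin k) (by simpa using hk)
  have hk0 : (0 : ℝ) < k := by exact_mod_cast (by omega : 0 < k)
  have hV : 0 < ∑ l, v l :=
    Finset.sum_pos (fun l _ ↦ hv l) ⟨⟨0, hn⟩, Finset.mem_univ _⟩
  have hmeas : Measurable fun (p : Fin k → ℝ) j ↦ k * v j / (∑ l, v l) * p (part j) := by
    fun_prop
  refine ⟨μ.map fun p j ↦ k * v j / (∑ l, v l) * p (part j),
    Measure.isProbabilityMeasure_map hmeas.aemeasurable, ?_, fun j x hx ↦ ?_⟩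
  · rw [ae_map_iff hmeas.aemeasurable (by measurability)]
    filter_upwards [hsimplex] with p ⟨hp, hsum⟩
    refine ⟨fun j ↦ mul_nonneg (div_nonneg (mul_pos hk0 (hv j)).le hV.le) (hp _), ?_⟩
    rw [← Finset.sum_fiberwise Finset.univ part, ← hsum]
    refine Finset.sum_congr rfl fun m _ ↦ ?_
    calc ∑ j with part j = m, k * v j / (∑ l, v l) * p (part j)
        = ∑ j with part j = m, k * p m / (∑ l, v l) * v j := by
          refine Finset.sum_congr rfl fun j hj ↦ ?_
          rw [(Finset.mem_filter.mp hj).2]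
          ring
      _ = p m := by
          rw [← Finset.mul_sum, hpart]
          field_simp
  · have hj := hv j
    rw [Measure.map_apply hmeas (measurableSet_le (by fun_prop) (by fun_prop)),
      Set.preimage_ofPred_eq]
    have := hmarginal (part j) ((∑ l, v l) * x / (k * v j)) (by positivity)
    rw [Fintype.card_fin] at this
    rw [← this]
    congr 1 with p
    simp only [Set.mem_ofPred_eq]
    rw [le_div_iff₀ (by positivity), div_mul_eq_mul_div, div_le_iff₀ hV, mul_comm x,
      mul_comm (p _)]
end

section
/- Fix an integer n ≥ 3 and battlefield values v_1,…,v_n > 0 with V = Σ_{j=1}^n v_j, and suppose v_j ≤ V/3 for every j ∈ [n]. Then there exists a probability measure μ on ℝ^n such that: (i) μ-almost surely every coordinate A_j is nonnegative and Σ_{j=1}^n A_j = 1; (ii) for every j ∈ [n] and x ≥ 0, μ{A : A_j ≤ x} = min(1, √(V·x/(3·v_j))); and (iii) if all 3 players of the 3-player Colonel Blotto game with unit budgets independently sample their bid vectors from μ, they are in Nash equilibrium: for every probability measure ν on ℝ^n that is almost surely nonnegative with coordinate sum at most 1, the expected payoff of a single player drawing from ν while the other 2 players draw independently from μ is at most V/3,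 which is the expected payoff each player receives under symmetric play of μ. -/
open MeasureTheory

open Classical in
/-- Colonel Blotto payoff: each battlefield's value is split evenly among
the players tied for the highest bid on it. -/
noncomputable def blottoPayoff {k n : ℕ} (v : Fin n → ℝ) (A : Fin k → Fin n → ℝ)
    (i : Fin k) : ℝ :=
  ∑ j, if ∀ i', A i' j ≤ A i j then
      v j / ((Finset.univ.filter fun i' : Fin k => ∀ i'', A i'' j ≤ A i' j).card : ℝ)
    else 0

/-- The strategy profile where player `i₀` plays `ν` and everyone else plays `μ`. -/
noncomputable def devFamily {α : Type*} [MeasurableSpace α] {k : ℕ} (i₀ : Fin k)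
    (μ ν : Measure α) : Fin k → Measure α :=
  fun i => if i = i₀ then ν else μ

theorem devFamily_prob {α : Type*} [MeasurableSpace α] {k : ℕ} (i₀ : Fin k)
    (μ ν : Measure α) (hμ : IsProbabilityMeasure μ) (hν : IsProbabilityMeasure ν) :
    ∀ i, IsProbabilityMeasure (devFamily i₀ μ ν i) := by
  intro i
  unfold devFamily
  split <;> assumption

/-- Expected payoff of player `i` when each player `i'` independently samples its
bid vector from `P i'`. -/
noncomputable def expectedPayoff {k n : ℕ} (v : Fin n → ℝ)
    (P : Fin k → Measure (Fin n → ℝ)) (hP : ∀ i, IsProbabilityMeasure (P i))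
    (i : Fin k) : ℝ :=
  haveI := hP
  ∫ A, blottoPayoff v A i ∂(Measure.pi P)

/-- A finite family `f` is a Parseval frame when `∑ j, ⟪f j, x⟫ ^ 2 = ‖x‖ ^ 2`. -/
def IsParsevalFrame {ι E : Type*} [Fintype ι] [NormedAddCommGroup E] [InnerProductSpace ℝ E]
    (f : ι → E) : Prop :=
  ∀ x, ∑ j, inner ℝ (f j) x ^ 2 = ‖x‖ ^ 2

theorem sum_eq_add_add_sum_sdiff_pair {ι : Type*} [Fintype ι] [DecidableEq ι] {a b : ι}
    (hab : a ≠ b) (g : ι → ℝ) : ∑ j, g j = g a + g b + ∑ j ∈ Finset.univ \ {a, b}, g j := by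
  rw [← Finset.sum_sdiff (Finset.subset_univ {a, b}), Finset.sum_pair hab]
  ring

theorem IsParsevalFrame.exists_rotate {ι E : Type*} [Fintype ι] [NormedAddCommGroup E]
    [InnerProductSpace ℝ E] {f : ι → E} (hf : IsParsevalFrame f) {a b : ι} (hab : a ≠ b) {p : ℝ}
    (hp : p ∈ Set.uIcc (‖f a‖ ^ 2) (‖f b‖ ^ 2)) :
    ∃ g : ι → E, IsParsevalFrame g ∧ ‖g a‖ ^ 2 = p ∧
      ‖g b‖ ^ 2 = ‖f a‖ ^ 2 + ‖f b‖ ^ 2 - p ∧ ∀ j, j ≠ a → j ≠ b → g j = f j := by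
  classical
  obtain ⟨θ, -, hθ⟩ : p ∈ (fun θ : ℝ => ‖Real.cos θ • f a + Real.sin θ • f b‖ ^ 2) ''
      Set.uIcc 0 (Real.pi / 2) := by
    apply intermediate_value_uIcc (Continuous.continuousOn (by fun_prop))
    simpa using hp
  have hcs := Real.sin_sq_add_cos_sq θ
  set c := Real.cos θ
  set s := Real.sin θ
  have hθ' : ‖c • f a + s • f b‖ ^ 2 = p := hθ
  have hga : Function.update (Function.update f a (c • f a + s • f b)) b (c • f b - s • f a) a
      = c • f a + s • f b := by simp [hab]
  have hgb : Function.update (Function.update f a (c • f a + s • f b)) b (c • f b - s • f a) b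
      = c • f b - s • f a := by simp
  have hg : ∀ j, j ≠ a → j ≠ b →
      Function.update (Function.update f a (c • f a + s • f b)) b (c • f b - s • f a) j = f j := by
    intro j ha hb
    simp [ha, hb]
  refine ⟨_, ?_, by rw [hga, hθ'], ?_, hg⟩
  · intro x
    rw [← hf x, sum_eq_add_add_sum_sdiff_pair hab, sum_eq_add_add_sum_sdiff_pair hab, hga, hgb]
    congr 1
    · simp only [inner_add_left, inner_sub_left, real_inner_smul_left]
      linear_combination (inner ℝ (f a) x ^ 2 + inner ℝ (f b) x ^ 2) * hcs
    · refine Finset.sum_congr rfl fun j hj => ?_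
      simp only [Finset.mem_sdiff, Finset.mem_insert, Finset.mem_singleton, not_or] at hj
      rw [hg j hj.2.1 hj.2.2]
  · rw [hgb, ← hθ', norm_add_sq_real, norm_sub_sq_real]
    simp only [norm_smul, mul_pow, real_inner_smul_left, real_inner_smul_right, Real.norm_eq_abs,
      sq_abs, real_inner_comm (f a) (f b)]
    linear_combination (‖f a‖ ^ 2 + ‖f b‖ ^ 2) * hcs

theorem exists_isParsevalFrame_of_zero_or_one {ι E : Type*} [Fintype ι] [NormedAddCommGroup E]
    [InnerProductSpace ℝ E] [FiniteDimensional ℝ E] {w : ι → ℝ} (hw : ∀ j, w j = 0 ∨ w j = 1)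
    (hs : ∑ j, w j = Module.finrank ℝ E) :
    ∃ f : ι → E, IsParsevalFrame f ∧ ∀ j, ‖f j‖ ^ 2 = w j := by
  classical
  have hw' : ∀ j, w j = if w j = 1 then 1 else 0 := by
    intro j
    rcases hw j with h | h <;> simp [h]
  have hcard : Fintype.card {j // w j = 1} = Module.finrank ℝ E := by
    rw [Fintype.card_subtype]
    have : ((Finset.univ.filter fun j => w j = 1).card : ℝ) = Module.finrank ℝ E := by
      rw [← hs, Finset.sum_congr rfl fun j _ => hw' j, Finset.sum_boole]
    exact_mod_cast this
  let b : OrthonormalBasis {j // w j = 1} ℝ E :=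
    (stdOrthonormalBasis ℝ E).reindex (Fintype.equivFinOfCardEq hcard).symm
  let f : ι → E := fun j => if h : w j = 1 then b ⟨j, h⟩ else 0
  refine ⟨f, fun x => ?_, fun j => ?_⟩
  · rw [← b.sum_sq_inner_right x]
    refine (Fintype.sum_of_injective _ Subtype.val_injective _ _ (fun j hj => ?_) fun j => ?_).symm
    · have : w j ≠ 1 := by simpa using hj
      simp [f, this]
    · simp [f, j.2]
  · rcases hw j with h | h <;> simp [f, h]

theorem exists_isParsevalFrame {ι E : Type*} [Fintype ι] [NormedAddCommGroup E]
    [InnerProductSpace ℝ E] [FiniteDimensional ℝ E] (w : ι → ℝ)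
    (h0 : ∀ j, 0 ≤ w j) (h1 : ∀ j, w j ≤ 1) (hs : ∑ j, w j = Module.finrank ℝ E) :
    ∃ f : ι → E, IsParsevalFrame f ∧ ∀ j, ‖f j‖ ^ 2 = w j := by
  classical
  induction hN : (Finset.univ.filter fun j => ¬(w j = 0 ∨ w j = 1)).card
    using Nat.strong_induction_on generalizing w with
  | _ N ih =>
  subst hN
  by_cases hint : ∀ j, w j = 0 ∨ w j = 1
  · exact exists_isParsevalFrame_of_zero_or_one hint hs
  obtain ⟨a, ha⟩ := not_forall.1 hint
  obtain ⟨b, hab, hb⟩ : ∃ b, a ≠ b ∧ ¬(w b = 0 ∨ w b = 1) := by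
    by_contra! hcon
    have hsum : w a + ((Finset.univ.erase a).filter fun j => w j = 1).card = Module.finrank ℝ E := by
      rw [← hs, ← Finset.add_sum_erase _ _ (Finset.mem_univ a), ← Finset.sum_boole]
      congr 1
      refine Finset.sum_congr rfl fun j hj => ?_
      rcases hcon j (Finset.ne_of_mem_erase hj).symm with h | h <;> simp [h]
    have hpos : 0 < w a := lt_of_le_of_ne (h0 a) fun h => ha (Or.inl h.symm)
    have hlt : w a < 1 := lt_of_le_of_ne (h1 a) fun h => ha (Or.inr h)
    set m := ((Finset.univ.erase a).filter fun j => w j = 1).card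
    have h₁ : (m : ℝ) < Module.finrank ℝ E := by linarith
    have h₂ : (Module.finrank ℝ E : ℝ) < m + 1 := by linarith
    norm_cast at h₁ h₂
    omega
  obtain ⟨p, q, hp, hp0, hq0, hp1, hq1, hpq, hmem⟩ : ∃ p q : ℝ, (p = 0 ∨ p = 1) ∧ 0 ≤ p ∧ 0 ≤ q ∧
      p ≤ 1 ∧ q ≤ 1 ∧ p + q = w a + w b ∧ w a ∈ Set.uIcc p q := by
    rcases le_total (w a + w b) 1 with h | h
    · refine ⟨0, w a + w b, Or.inl rfl, le_rfl, ?_, zero_le_one, h, zero_add _, ?_⟩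
      · linarith [h0 a, h0 b]
      · exact Set.mem_uIcc.2 (Or.inl ⟨h0 a, by linarith [h0 b]⟩)
    · refine ⟨1, w a + w b - 1, Or.inr rfl, zero_le_one, by linarith, le_rfl, ?_, by ring, ?_⟩
      · linarith [h1 a, h1 b]
      · exact Set.mem_uIcc.2 (Or.inr ⟨by linarith [h1 b], h1 a⟩)
  let w' := Function.update (Function.update w a p) b q
  have hwa : w' a = p := by simp [w', hab]
  have hwb : w' b = q := by simp [w']
  have hw : ∀ j, j ≠ a → j ≠ b → w' j = w j := fun j ha hb => by simp [w', ha, hb]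
  have hprop : ∀ P : ℝ → Prop, P p → P q → (∀ j, P (w j)) → ∀ j, P (w' j) := by
    intro P hPp hPq hP j
    by_cases hja : j = a
    · rwa [hja, hwa]
    by_cases hjb : j = b
    · rwa [hjb, hwb]
    rw [hw j hja hjb]
    exact hP j
  have hs' : ∑ j, w' j = Module.finrank ℝ E := by
    rw [← hs, sum_eq_add_add_sum_sdiff_pair hab, sum_eq_add_add_sum_sdiff_pair hab, hwa, hwb, hpq]
    congr 1
    refine Finset.sum_congr rfl fun j hj => ?_
    simp only [Finset.mem_sdiff, Finset.mem_insert, Finset.mem_singleton, not_or] at hj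
    exact hw j hj.2.1 hj.2.2
  obtain ⟨f, hf, hfn⟩ := ih _ (Finset.card_lt_card (by
    refine (Finset.ssubset_iff_of_subset fun j hj => ?_).2
      ⟨a, by simpa using ha, by simpa [hwa, ← imp_iff_not_or] using fun h => hp.resolve_left h⟩
    by_cases hja : j = a
    · simp only [Finset.mem_filter_univ, hja, hwa] at hj
      exact absurd hp hj
    by_cases hjb : j = b
    · subst hjb
      simpa using hb
    simpa [hw j hja hjb] using hj)) w' (hprop (0 ≤ ·) hp0 hq0 h0) (hprop (· ≤ 1) hp1 hq1 h1) hs' rfl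
  obtain ⟨g, hg, hga, hgb, hgj⟩ := hf.exists_rotate hab (p := w a) (by rwa [hfn, hfn, hwa, hwb])
  refine ⟨g, hg, fun j => ?_⟩
  by_cases hja : j = a
  · rw [hja, hga]
  by_cases hjb : j = b
  · rw [hjb, hgb, hfn, hfn, hwa, hwb, hpq]
    ring
  rw [hgj j hja hjb, hfn, hw j hja hjb]

/-- The cross section at height `s` of the part of the unit ball of `ℝ × ℂ` lying outside a double
cone around the first axis is an annulus of area `π (1 - (s / t) ^ 2)`. -/
theorem volume_ball_diff_cone_slice {t : ℝ} (ht0 : 0 < t) (ht1 : t ≤ 1) (s : ℝ) :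
    volume {z : ℂ | s ^ 2 ≤ t ^ 2 * (s ^ 2 + ‖z‖ ^ 2) ∧ s ^ 2 + ‖z‖ ^ 2 ≤ 1} =
      ENNReal.ofReal (1 - (s / t) ^ 2) * NNReal.pi := by
  have ht : 0 < t ^ 2 := by positivity
  have hst : (s / t) ^ 2 * t ^ 2 = s ^ 2 := by field_simp
  have hle : s ^ 2 ≤ (s / t) ^ 2 := by
    rw [← hst]
    exact mul_le_of_le_one_right (sq_nonneg _) (pow_le_one₀ ht0.le ht1)
  have hiff : ∀ q : ℝ, s ^ 2 ≤ t ^ 2 * (s ^ 2 + q) ↔ (s / t) ^ 2 - s ^ 2 ≤ q := by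
    intro q
    rw [sub_le_iff_le_add, div_pow, div_le_iff₀ ht]
    ring_nf
  simp_rw [hiff]
  by_cases h : (s / t) ^ 2 ≤ 1
  · have hset : {z : ℂ | (s / t) ^ 2 - s ^ 2 ≤ ‖z‖ ^ 2 ∧ s ^ 2 + ‖z‖ ^ 2 ≤ 1} =
        Metric.closedBall 0 (√(1 - s ^ 2)) \ Metric.ball 0 (√((s / t) ^ 2 - s ^ 2)) := by
      ext z
      simp only [Set.mem_ofPred_eq, Set.mem_sdiff, mem_closedBall_zero_iff, mem_ball_zero_iff, not_lt,
        Real.sqrt_le_left (norm_nonneg z)]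
      rw [Real.le_sqrt (norm_nonneg z) (by linarith), le_sub_iff_add_le', and_comm]
    rw [hset, measure_sdiff ((Metric.ball_subset_ball (Real.sqrt_le_sqrt (by linarith))).trans
      Metric.ball_subset_closedBall) measurableSet_ball.nullMeasurableSet measure_ball_lt_top.ne,
      Complex.volume_closedBall, Complex.volume_ball, ← ENNReal.ofReal_pow (Real.sqrt_nonneg _),
      ← ENNReal.ofReal_pow (Real.sqrt_nonneg _), Real.sq_sqrt (by linarith),
      Real.sq_sqrt (by linarith), ← ENNReal.sub_mul (fun _ _ => ENNReal.coe_ne_top),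
      ← ENNReal.ofReal_sub _ (by linarith)]
    ring_nf
  · rw [ENNReal.ofReal_of_nonpos (by linarith), zero_mul]
    convert measure_empty (μ := volume)
    ext z
    simp only [Set.mem_ofPred_eq, Set.mem_empty_iff_false, iff_false, not_and]
    intro h₁ h₂
    linarith

theorem lintegral_comp_div (f : ℝ → ENNReal) {t : ℝ} (ht : 0 < t) :
    ∫⁻ s, f (s / t) = ENNReal.ofReal t * ∫⁻ s, f s := by
  conv_rhs => rw [← Real.smul_map_volume_mul_left (inv_ne_zero ht.ne'), lintegral_smul_measure,
    show (fun x => t⁻¹ * x) = (Homeomorph.mulLeft₀ _ (inv_ne_zero ht.ne')).toMeasurableEquiv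
      from rfl, lintegral_map_equiv]
  rw [smul_eq_mul, ← mul_assoc, ← ENNReal.ofReal_mul ht.le, abs_of_pos (inv_pos.2 ht),
    mul_inv_cancel₀ ht.ne']
  simp [div_eq_inv_mul]

theorem volume_ball_diff_cone_axis {t : ℝ} (ht0 : 0 < t) (ht1 : t ≤ 1) :
    volume {x : WithLp 2 (ℝ × ℂ) | |x.fst| ≤ t * ‖x‖ ∧ ‖x‖ ≤ 1} =
      ENNReal.ofReal t * ∫⁻ s, ENNReal.ofReal (1 - s ^ 2) * NNReal.pi := by
  let T : Set (ℝ × ℂ) :=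
    {p | p.1 ^ 2 ≤ t ^ 2 * (p.1 ^ 2 + ‖p.2‖ ^ 2) ∧ p.1 ^ 2 + ‖p.2‖ ^ 2 ≤ 1}
  have hT : MeasurableSet T :=
    .inter (measurableSet_le (f := fun p : ℝ × ℂ => p.1 ^ 2) (by fun_prop) (by fun_prop))
      (measurableSet_le (f := fun p : ℝ × ℂ => p.1 ^ 2 + ‖p.2‖ ^ 2) (by fun_prop) (by fun_prop))
  have hpre : {x : WithLp 2 (ℝ × ℂ) | |x.fst| ≤ t * ‖x‖ ∧ ‖x‖ ≤ 1} = WithLp.ofLp ⁻¹' T := by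
    ext x
    have hx : ‖x‖ ^ 2 = x.fst ^ 2 + ‖x.snd‖ ^ 2 := by
      simp [WithLp.prod_norm_sq_eq_of_L2]
    have h1 : |x.fst| ≤ t * ‖x‖ ↔ x.fst ^ 2 ≤ t ^ 2 * ‖x‖ ^ 2 := by
      rw [← mul_pow, sq_le_sq, abs_of_nonneg (a := t * ‖x‖) (by positivity)]
    have h2 : ‖x‖ ≤ 1 ↔ ‖x‖ ^ 2 ≤ 1 := by
      rw [sq_le_one_iff₀ (norm_nonneg x)]
    rw [Set.mem_ofPred_eq, h1, h2, hx]
    rfl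
  rw [hpre, (WithLp.volume_preserving_ofLp ℝ ℂ).measure_preimage hT.nullMeasurableSet,
    Measure.volume_eq_prod, Measure.prod_apply hT,
    ← lintegral_comp_div (fun s => ENNReal.ofReal (1 - s ^ 2) * NNReal.pi) ht0]
  exact lintegral_congr fun s => volume_ball_diff_cone_slice ht0 ht1 s

theorem volume_ball_diff_cone {u : WithLp 2 (ℝ × ℂ)} (hu : ‖u‖ = 1) {t : ℝ} (ht0 : 0 < t)
    (ht1 : t ≤ 1) :
    volume {x | |inner ℝ u x| ≤ t * ‖x‖ ∧ ‖x‖ ≤ 1} =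
      ENNReal.ofReal t * ∫⁻ s, ENNReal.ofReal (1 - s ^ 2) * NNReal.pi := by
  let e : WithLp 2 (ℝ × ℂ) := WithLp.toLp 2 (1, 0)
  have he : ‖e‖ = 1 := by
    rw [← sq_eq_sq₀ (norm_nonneg _) zero_le_one, WithLp.prod_norm_sq_eq_of_L2]
    simp [e]
  let ρ : WithLp 2 (ℝ × ℂ) ≃ₗᵢ[ℝ] WithLp 2 (ℝ × ℂ) := (ℝ ∙ (u - e))ᗮ.reflection
  have hρ : ρ u = e := Submodule.reflection_sub (by rw [hu, he])
  rw [← volume_ball_diff_cone_axis ht0 ht1, ← ρ.measurePreserving.measure_preimage_emb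
    ρ.toHomeomorph.measurableEmbedding {x | |x.fst| ≤ t * ‖x‖ ∧ ‖x‖ ≤ 1}]
  congr 1
  ext x
  have : inner ℝ u x = (ρ x).fst := by
    rw [← ρ.inner_map_map, hρ, WithLp.prod_inner_apply]
    simp [e]
  simp only [Set.mem_preimage, Set.mem_ofPred_eq, this, ρ.norm_map]

/-- **Archimedes' hat-box theorem**: the projection to a line of the direction of a uniformly random
point of the three-dimensional unit ball has a uniformly distributed absolute value. -/
theorem cond_closedBall_abs_inner_le {u : WithLp 2 (ℝ × ℂ)} (hu : ‖u‖ = 1) {t : ℝ} (ht : 0 ≤ t) :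
    ProbabilityTheory.cond volume (Metric.closedBall 0 1) {x | |inner ℝ u x| ≤ t * ‖x‖} =
      ENNReal.ofReal (min 1 t) := by
  set K := ∫⁻ s : ℝ, ENNReal.ofReal (1 - s ^ 2) * NNReal.pi
  have hball : volume (Metric.closedBall (0 : WithLp 2 (ℝ × ℂ)) 1) = K := by
    have := volume_ball_diff_cone hu one_pos le_rfl
    rw [ENNReal.ofReal_one, one_mul] at this
    refine Eq.trans ?_ this
    congr 1
    ext x
    simpa using fun _ => by simpa [hu] using abs_real_inner_le_norm u x
  have hK0 : K ≠ 0 := hball ▸ (Metric.measure_closedBall_pos volume _ one_pos).ne'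
  have hK : K ≠ ⊤ := hball ▸ measure_closedBall_lt_top.ne
  have hpos : ∀ r : ℝ, 0 < r → r ≤ 1 → ProbabilityTheory.cond volume (Metric.closedBall 0 1)
      {x | |inner ℝ u x| ≤ r * ‖x‖} = ENNReal.ofReal r := by
    intro r hr0 hr1
    rw [ProbabilityTheory.cond_apply measurableSet_closedBall, hball, Set.inter_comm,
      show {x | |inner ℝ u x| ≤ r * ‖x‖} ∩ Metric.closedBall 0 1 =
        {x | |inner ℝ u x| ≤ r * ‖x‖ ∧ ‖x‖ ≤ 1} by ext x; simp,
      volume_ball_diff_cone hu hr0 hr1, mul_left_comm, ENNReal.inv_mul_cancel hK0 hK, mul_one]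
  have : IsProbabilityMeasure (ProbabilityTheory.cond volume
      (Metric.closedBall (0 : WithLp 2 (ℝ × ℂ)) 1)) :=
    ProbabilityTheory.cond_isProbabilityMeasure_of_finite (hball ▸ hK0) (hball ▸ hK)
  rcases le_total 1 t with h1 | h1
  · rw [min_eq_left h1, ENNReal.ofReal_one, ← measure_univ (μ := ProbabilityTheory.cond volume
      (Metric.closedBall (0 : WithLp 2 (ℝ × ℂ)) 1))]
    congr 1
    refine Set.eq_univ_of_forall fun x => ?_
    have := abs_real_inner_le_norm u x
    rw [hu] at this
    exact this.trans (by gcongr)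
  rw [min_eq_right h1]
  rcases ht.eq_or_lt with rfl | h0
  · rw [ENNReal.ofReal_zero, ← nonpos_iff_eq_zero]
    refine ENNReal.le_of_forall_pos_le_add fun ε hε _ => ?_
    rw [zero_add]
    have hε' : (0 : ℝ) < min ε 1 := lt_min hε one_pos
    calc ProbabilityTheory.cond volume (Metric.closedBall 0 1) {x | |inner ℝ u x| ≤ 0 * ‖x‖}
      _ ≤ ProbabilityTheory.cond volume (Metric.closedBall 0 1)
          {x | |inner ℝ u x| ≤ min (ε : ℝ) 1 * ‖x‖} :=
          by
          gcongr
          exact hε'.le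
      _ = ENNReal.ofReal (min ε 1) := hpos _ hε' (min_le_right _ _)
      _ ≤ ε := ENNReal.ofReal_le_of_le_toReal (min_le_left _ _)
  · exact hpos t h0 h1

/-- For positive weights `w j ≤ 1` with sum `3`, the variables `w j * U j ^ 2` with each `U j` uniform
on `[0, 1]` can be coupled so that their sum is almost surely `1`. -/
theorem exists_coupling_sum_eq_one {ι : Type*} [Fintype ι] (w : ι → ℝ) (h0 : ∀ j, 0 < w j)
    (h1 : ∀ j, w j ≤ 1) (hs : ∑ j, w j = 3) :
    ∃ μ : Measure (ι → ℝ), IsProbabilityMeasure μ ∧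
      (∀ᵐ A ∂μ, (∀ j, 0 ≤ A j) ∧ ∑ j, A j = 1) ∧
      ∀ j, ∀ x : ℝ, 0 ≤ x → μ {A | A j ≤ x} = ENNReal.ofReal (min 1 (√(x / w j))) := by
  have hdim : (Module.finrank ℝ (WithLp 2 (ℝ × ℂ)) : ℝ) = 3 := by
    rw [(WithLp.linearEquiv 2 ℝ (ℝ × ℂ)).finrank_eq, Module.finrank_prod]
    norm_num
  obtain ⟨f, hf, hfw⟩ := exists_isParsevalFrame (E := WithLp 2 (ℝ × ℂ)) w
    (fun j => (h0 j).le) h1 (hs.trans hdim.symm)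
  let P := ProbabilityTheory.cond volume (Metric.closedBall (0 : WithLp 2 (ℝ × ℂ)) 1)
  have hP : IsProbabilityMeasure P := ProbabilityTheory.cond_isProbabilityMeasure_of_finite
    (Metric.measure_closedBall_pos volume _ one_pos).ne' measure_closedBall_lt_top.ne
  let X : WithLp 2 (ℝ × ℂ) → ι → ℝ := fun x j => inner ℝ (f j) x ^ 2 / ‖x‖ ^ 2
  have hX : Measurable X := by fun_prop
  have hne : ∀ᵐ x ∂P, x ≠ 0 :=
    ProbabilityTheory.cond_absolutelyContinuous.ae_le (Measure.ae_ne volume 0)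
  refine ⟨P.map X, Measure.isProbabilityMeasure_map hX.aemeasurable, ?_, fun j x hx => ?_⟩
  · rw [ae_map_iff hX.aemeasurable (by measurability)]
    filter_upwards [hne] with x hx
    refine ⟨fun j => by positivity, ?_⟩
    rw [← Finset.sum_div, hf, div_self (by simpa using hx)]
  · rw [Measure.map_apply hX (measurableSet_le (by fun_prop) (by fun_prop))]
    have hfj : 0 < ‖f j‖ := (norm_nonneg _).lt_of_ne fun h => (h0 j).ne (by simp [← hfw, ← h])
    have hu : ‖‖f j‖⁻¹ • f j‖ = 1 := norm_smul_inv_norm (norm_pos_iff.1 hfj)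
    rw [← cond_closedBall_abs_inner_le hu (Real.sqrt_nonneg _)]
    refine measure_congr ?_
    filter_upwards [hne] with y hy
    have hy' : 0 < ‖y‖ := norm_pos_iff.2 hy
    refine propext ?_
    change inner ℝ (f j) y ^ 2 / ‖y‖ ^ 2 ≤ x ↔ |inner ℝ (‖f j‖⁻¹ • f j) y| ≤ √(x / w j) * ‖y‖
    rw [real_inner_smul_left, abs_mul, abs_of_pos (inv_pos.2 hfj), inv_mul_le_iff₀ hfj,
      ← hfw, Real.sqrt_div hx, Real.sqrt_sq hfj.le, div_le_iff₀ (by positivity)]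
    rw [show ‖f j‖ * (√x / ‖f j‖ * ‖y‖) = √x * ‖y‖ by field_simp,
      ← sq_le_sq₀ (abs_nonneg (inner ℝ _ _)) (by positivity), mul_pow, sq_abs, Real.sq_sqrt hx]

theorem measurableSet_forall_le {k n : ℕ} (i : Fin k) (j : Fin n) :
    MeasurableSet {A : Fin k → Fin n → ℝ | ∀ i', A i' j ≤ A i j} := by
  simp only [Set.ofPred_forall]
  exact .iInter fun i' => measurableSet_le (by fun_prop) (by fun_prop)

theorem measurable_blottoPayoff {k n : ℕ} (v : Fin n → ℝ) (i : Fin k) :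
    Measurable fun A => blottoPayoff v A i := by
  unfold blottoPayoff
  refine Finset.measurable_sum _ fun j _ => Measurable.ite (measurableSet_forall_le i j)
    (measurable_const.div ?_) measurable_const
  simp only [← Finset.sum_boole]
  exact Finset.measurable_sum _ fun i' _ =>
    Measurable.ite (measurableSet_forall_le i' j) measurable_const measurable_const

theorem blottoPayoff_nonneg {k n : ℕ} {v : Fin n → ℝ} (hv : ∀ j, 0 ≤ v j)
    (A : Fin k → Fin n → ℝ) (i : Fin k) : 0 ≤ blottoPayoff v A i := by
  refine Finset.sum_nonneg fun j _ => ?_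
  split_ifs
  · exact div_nonneg (hv j) (Nat.cast_nonneg _)
  · exact le_rfl

open Classical in
theorem blottoPayoff_le {k n : ℕ} {v : Fin n → ℝ} (hv : ∀ j, 0 ≤ v j)
    (A : Fin k → Fin n → ℝ) (i : Fin k) :
    blottoPayoff v A i ≤ ∑ j, if ∀ i', A i' j ≤ A i j then v j else 0 := by
  refine Finset.sum_le_sum fun j _ => ?_
  split_ifs with h
  · refine div_le_self (hv j) ?_
    rw [Nat.one_le_cast, Nat.one_le_iff_ne_zero, Finset.card_ne_zero]
    exact ⟨i, by simpa using h⟩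
  · exact le_rfl

theorem sum_blottoPayoff {k n : ℕ} [NeZero k] (v : Fin n → ℝ) (A : Fin k → Fin n → ℝ) :
    ∑ i, blottoPayoff v A i = ∑ j, v j := by
  classical
  unfold blottoPayoff
  rw [Finset.sum_comm]
  refine Finset.sum_congr rfl fun j _ => ?_
  obtain ⟨m, hm⟩ := Finite.exists_max fun i => A i j
  rw [← Finset.sum_filter, Finset.sum_const, nsmul_eq_mul]
  refine mul_div_cancel₀ _ (Nat.cast_ne_zero.2 (Finset.card_ne_zero.2 ⟨m, ?_⟩))
  simpa using hm

theorem pi_forall_le_eq {k n : ℕ} (μ ν : Measure (Fin n → ℝ)) [IsProbabilityMeasure μ]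
    [IsProbabilityMeasure ν] (i₀ : Fin (k + 1)) (j : Fin n) :
    haveI := devFamily_prob i₀ μ ν ‹_› ‹_›
    Measure.pi (devFamily i₀ μ ν) {A | ∀ i', A i' j ≤ A i₀ j} =
      ∫⁻ b, μ {A | A j ≤ b j} ^ k ∂ν := by
  have := devFamily_prob i₀ μ ν ‹_› ‹_›
  let T : Set ((Fin n → ℝ) × (Fin k → Fin n → ℝ)) := {p | ∀ i', p.2 i' j ≤ p.1 j}
  have hT : MeasurableSet T := by
    simp only [T, Set.ofPred_forall]
    exact .iInter fun i' => measurableSet_le (by fun_prop) (by fun_prop)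
  have hpre : {A : Fin (k + 1) → Fin n → ℝ | ∀ i', A i' j ≤ A i₀ j} =
      MeasurableEquiv.piFinSuccAbove (fun _ => Fin n → ℝ) i₀ ⁻¹' T := by
    ext A
    simp only [Set.mem_ofPred_eq, Fin.forall_iff_succAbove i₀, le_refl, true_and]
    rfl
  rw [hpre, (measurePreserving_piFinSuccAbove (devFamily i₀ μ ν) i₀).measure_preimage
    hT.nullMeasurableSet, Measure.prod_apply hT]
  have hi : devFamily i₀ μ ν i₀ = ν := if_pos rfl
  have hs : ∀ i', devFamily i₀ μ ν (i₀.succAbove i') = μ := fun i' => if_neg (Fin.succAbove_ne _ _)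
  simp only [hi, hs]
  refine lintegral_congr fun b => ?_
  rw [show Prod.mk b ⁻¹' T = Set.univ.pi fun _ => {A | A j ≤ b j} by ext A; simp [T],
    Measure.pi_pi]
  simp

theorem ofReal_expectedPayoff_le {k n : ℕ} {v : Fin n → ℝ} (hv : ∀ j, 0 ≤ v j)
    (μ ν : Measure (Fin n → ℝ)) (hμ : IsProbabilityMeasure μ) (hν : IsProbabilityMeasure ν)
    (i₀ : Fin (k + 1)) :
    ENNReal.ofReal (expectedPayoff v (devFamily i₀ μ ν) (devFamily_prob i₀ μ ν hμ hν) i₀) ≤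
      ∫⁻ b, ∑ j, ENNReal.ofReal (v j) * μ {A | A j ≤ b j} ^ k ∂ν := by
  classical
  have := devFamily_prob i₀ μ ν hμ hν
  have hm : ∀ j : Fin n, Measurable fun b : Fin n → ℝ => μ {A | A j ≤ b j} := fun j =>
    (Monotone.measurable (f := fun s : ℝ => μ {A | A j ≤ s}) fun s t hst =>
      measure_mono (Set.ofPred_subset_ofPred.2 fun _ hA => hA.trans hst)).comp
        (measurable_pi_apply j)
  have hind : ∀ j, Measurable ({A : Fin (k + 1) → Fin n → ℝ | ∀ i', A i' j ≤ A i₀ j}.indicator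
      (1 : (Fin (k + 1) → Fin n → ℝ) → ENNReal)) := fun j =>
    measurable_one.indicator (measurableSet_forall_le i₀ j)
  unfold expectedPayoff
  rw [integral_eq_lintegral_of_nonneg_ae (ae_of_all _ fun A => blottoPayoff_nonneg hv A i₀)
    (measurable_blottoPayoff v i₀).aestronglyMeasurable]
  refine ENNReal.ofReal_toReal_le.trans ?_
  rw [lintegral_finsetSum _ fun j _ => ((hm j).pow_const k).const_mul _]
  calc _ ≤ ∫⁻ A, ∑ j, ENNReal.ofReal (v j) *
        Set.indicator {A | ∀ i', A i' j ≤ A i₀ j} 1 A ∂Measure.pi (devFamily i₀ μ ν) := by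
        refine lintegral_mono fun A => ?_
        refine (ENNReal.ofReal_le_ofReal (blottoPayoff_le hv A i₀)).trans ?_
        rw [ENNReal.ofReal_sum_of_nonneg fun j _ => by split_ifs <;> simp [hv]]
        refine Finset.sum_le_sum fun j _ => ?_
        by_cases h : ∀ i', A i' j ≤ A i₀ j <;> simp [h]
    _ = _ := by
        rw [lintegral_finsetSum _ fun j _ => (hind j).const_mul _]
        refine Finset.sum_congr rfl fun j _ => ?_
        rw [lintegral_const_mul _ (hind j),
          lintegral_indicator_one (measurableSet_forall_le i₀ j), pi_forall_le_eq,
          lintegral_const_mul _ ((hm j).pow_const k)]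

theorem sum_expectedPayoff {k n : ℕ} [NeZero k] {v : Fin n → ℝ} (hv : ∀ j, 0 ≤ v j)
    (P : Fin k → Measure (Fin n → ℝ)) (hP : ∀ i, IsProbabilityMeasure (P i)) :
    ∑ i, expectedPayoff v P hP i = ∑ j, v j := by
  unfold expectedPayoff
  rw [← integral_finsetSum _ fun i _ => ?_]
  · simp [sum_blottoPayoff]
  · refine Integrable.of_bound (measurable_blottoPayoff v i).aestronglyMeasurable (∑ j, v j)
      (ae_of_all _ fun A => ?_)
    rw [Real.norm_of_nonneg (blottoPayoff_nonneg hv A i), ← sum_blottoPayoff v A]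
    exact Finset.single_le_sum (fun i _ => blottoPayoff_nonneg hv A i) (Finset.mem_univ i)

theorem stmt5 (n : ℕ) (hn : 3 ≤ n) (v : Fin n → ℝ) (hv : ∀ j, 0 < v j)
    (hbound : ∀ j, v j ≤ (∑ l, v l) / 3) :
    ∃ (μ : Measure (Fin n → ℝ)) (hμ : IsProbabilityMeasure μ),
      (∀ᵐ A ∂μ, (∀ j, 0 ≤ A j) ∧ ∑ j, A j = 1) ∧
      (∀ j, ∀ x : ℝ, 0 ≤ x →
        μ {A : Fin n → ℝ | A j ≤ x} =
          ENNReal.ofReal (min 1 (Real.sqrt ((∑ l, v l) * x / (3 * v j))))) ∧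
      (∀ i₀ : Fin 3,
        (∀ (ν : Measure (Fin n → ℝ)) (hν : IsProbabilityMeasure ν),
          (∀ᵐ A ∂ν, (∀ j, 0 ≤ A j) ∧ ∑ j, A j ≤ 1) →
          expectedPayoff (k := 3) v (devFamily i₀ μ ν) (devFamily_prob i₀ μ ν hμ hν) i₀ ≤
            (∑ l, v l) / 3) ∧
        expectedPayoff (k := 3) v (fun _ => μ) (fun _ => hμ) i₀ = (∑ l, v l) / 3) := by
  set V := ∑ l, v l
  have hV : 0 < V := Finset.sum_pos (fun j _ => hv j) ⟨⟨0, by omega⟩, Finset.mem_univ _⟩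
  have hw : ∀ x j, x / (3 * v j / V) = V * x / (3 * v j) := fun x j => by
    have := hv j
    field_simp
  obtain ⟨μ, hμ, hsum, hcdf⟩ := exists_coupling_sum_eq_one (fun j => 3 * v j / V)
    (fun j => by have := hv j; positivity)
    (fun j => by rw [div_le_one hV]; linarith [hbound j])
    (by rw [← Finset.sum_div, ← Finset.mul_sum, mul_div_cancel_right₀ _ hV.ne'])
  simp only [hw] at hcdf
  have hdev : ∀ (i₀ : Fin 3) (ν : Measure (Fin n → ℝ)) (hν : IsProbabilityMeasure ν),
      (∀ᵐ A ∂ν, (∀ j, 0 ≤ A j) ∧ ∑ j, A j ≤ 1) →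
      expectedPayoff (k := 3) v (devFamily i₀ μ ν) (devFamily_prob i₀ μ ν hμ hν) i₀ ≤ V / 3 := by
    intro i₀ ν hν hb
    rw [← ENNReal.ofReal_le_ofReal_iff (by positivity)]
    refine (ofReal_expectedPayoff_le (k := 2) (fun j => (hv j).le) μ ν hμ hν i₀).trans ?_
    calc _ ≤ ∫⁻ _, ENNReal.ofReal (V / 3) ∂ν := by
          refine lintegral_mono_ae ?_
          filter_upwards [hb] with b hb
          calc _ ≤ ∑ j, ENNReal.ofReal (V / 3 * b j) := by
                refine Finset.sum_le_sum fun j _ => ?_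
                have hj := hv j
                have hbj := hb.1 j
                rw [hcdf j _ hbj, ← ENNReal.ofReal_pow (by positivity),
                  ← ENNReal.ofReal_mul hj.le]
                refine ENNReal.ofReal_le_ofReal ?_
                calc _ ≤ v j * √(V * b j / (3 * v j)) ^ 2 := by
                      gcongr
                      exact min_le_right _ _
                  _ = _ := by
                      rw [Real.sq_sqrt (by positivity)]
                      field_simp
            _ = ENNReal.ofReal (V / 3 * ∑ j, b j) := by
                rw [Finset.mul_sum, ENNReal.ofReal_sum_of_nonneg]
                exact fun j _ => mul_nonneg (by positivity) (hb.1 j)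
            _ ≤ _ := ENNReal.ofReal_le_ofReal (mul_le_of_le_one_right (by positivity) hb.2)
      _ = _ := by simp
  have hle : ∀ i₀ : Fin 3, expectedPayoff (k := 3) v (fun _ => μ) (fun _ => hμ) i₀ ≤ V / 3 := by
    intro i₀
    have hself : devFamily i₀ μ μ = fun _ => μ := funext fun i => ite_self μ
    simpa only [hself] using hdev i₀ μ hμ (hsum.mono fun A hA => ⟨hA.1, hA.2.le⟩)
  refine ⟨μ, hμ, hsum, hcdf, fun i₀ => ⟨hdev i₀, ?_⟩⟩
  have htotal : ∑ i, expectedPayoff (k := 3) v (fun _ => μ) (fun _ => hμ) i =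
      ∑ _i : Fin 3, V / 3 := by
    rw [sum_expectedPayoff fun j => (hv j).le]
    simp [V, mul_div_cancel₀]
  exact (Finset.sum_eq_sum_iff_of_le fun i _ => hle i).1 htotal i₀ (Finset.mem_univ _)
end
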